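/- Let X be a strictly stable random variable with parameters (ν, θ, τ) and write V̄ = log|X| − τ. Then E[V̄⁶] = 15·DV³ + 15π⁴((1 − θ⁴)/8 + (ν² − 1)/15)·DV + 8π⁶((1 − θ⁶)/32 + (ν³ − 1)/63) + 40ζ(3)²(ν^{3/2} − 1)². -/

import Mathlib

open MeasureTheory ProbabilityTheory

/-- The real value of the Riemann zeta function at a real argument. -/
noncomputable def zetaR (s : ℝ) : ℝ := (riemannZeta (s : ℂ)).re

/-- A real random variable `X` is strictly stable with parameters `(ν, θ, τ)` if
`ν ≥ 1/4`, `|θ| ≤ min 1 (2√ν − 1)`, `P(X = 0) = 0`, `log |X|` has finite absolute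
moments of every order, and the characteristic function of `X` is
`E[exp(i k X)] = exp(−exp(ν^{−1/2}(log|k| + τ − i(π/2)θ sign k) + C(ν^{−1/2} − 1)))`
for all real `k ≠ 0`, where `C` is the Euler–Mascheroni constant. -/
def IsStrictlyStable {Ω : Type*} [MeasureSpace Ω] (X : Ω → ℝ) (ν θ τ : ℝ) : Prop :=
  Measurable X ∧ (1/4 : ℝ) ≤ ν ∧ |θ| ≤ min 1 (2 * Real.sqrt ν - 1) ∧
  (ℙ : Measure Ω) {ω | X ω = 0} = 0 ∧
  (∀ p : ℕ, Integrable (fun ω => (abs (Real.log (abs (X ω)))) ^ p)) ∧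
  ∀ k : ℝ, k ≠ 0 →
    (∫ ω, Complex.exp (Complex.I * (k : ℂ) * (X ω : ℂ))) =
      Complex.exp (-Complex.exp
        (((ν ^ (-(1/2) : ℝ) : ℝ) : ℂ) *
            (((Real.log |k| : ℝ) : ℂ) + (τ : ℂ) -
              Complex.I * ((Real.pi / 2 : ℝ) : ℂ) * (θ : ℂ) * ((Real.sign k : ℝ) : ℂ)) +
          ((Real.eulerMascheroniConstant : ℝ) : ℂ) * (((ν ^ (-(1/2) : ℝ) : ℝ) : ℂ) - 1)))


noncomputable def zsum (j : ℕ) : ℝ := ∑' m : ℕ, 1 / ((m : ℝ) + 1) ^ j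

noncomputable def gco (n : ℕ) : ℝ :=
  if n = 0 then 0 else if n = 1 then Real.eulerMascheroniConstant else zsum n / n

lemma zsum_summable (j : ℕ) (hj : 2 ≤ j) : Summable (fun m : ℕ => 1 / ((m : ℝ) + 1) ^ j) := by
  have := (summable_nat_add_iff 1).2 (Real.summable_one_div_nat_pow.2 (show 1 < j by omega))
  simpa using this

lemma logGamma_tendsto (x : ℝ) (hx : |x| < 1) :
    Filter.Tendsto (fun n : ℕ => ∑ m ∈ Finset.range (n + 1),
      (-Real.log (1 - x / ((m : ℝ) + 1)) - x / ((m : ℝ) + 1))) Filter.atTop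
      (nhds (Real.log (Real.Gamma (1 - x)) - Real.eulerMascheroniConstant * x)) := by
  have hx' := abs_lt.1 hx
  have h1 := Real.BohrMollerup.tendsto_log_gamma (show 0 < 1 - x by linarith)
  have h2 := (Filter.tendsto_add_atTop_iff_nat 1).2 Real.tendsto_harmonic_sub_log
  have h3 : Filter.Tendsto (fun n : ℕ => Real.log ((n : ℝ) + 1) - Real.log n) Filter.atTop
      (nhds 0) := by
    simpa using Real.tendsto_log_nat_add_one_sub_log
  have h4 := (h1.sub (h2.mul_const x)).add (h3.mul_const (1 - x))
  simp only [zero_mul, add_zero] at h4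
  refine h4.congr' ?_
  filter_upwards [Filter.eventually_ge_atTop 1] with n hn
  rw [Finset.sum_sub_distrib, Finset.sum_neg_distrib]
  have e1 : (((harmonic (n + 1) : ℚ)) : ℝ) = ∑ m ∈ Finset.range (n + 1), 1 / ((m : ℝ) + 1) := by
    simp [harmonic]
  have e2 : Real.log (n.factorial) = ∑ m ∈ Finset.range (n + 1), Real.log ((m : ℝ) + 1)
      - Real.log (n + 1) := by
    rw [Finset.sum_range_succ, add_sub_cancel_right]
    clear hn e1
    induction n with
    | zero => simp
    | succ k ih =>
      rw [Finset.sum_range_succ, ← ih, Nat.factorial_succ, Nat.cast_mul, Real.log_mul]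
      · push_cast; ring
      · positivity
      · positivity
  have e3 : ∑ m ∈ Finset.range (n + 1), Real.log (1 - x / ((m : ℝ) + 1)) =
      ∑ m ∈ Finset.range (n + 1), Real.log (1 - x + m) -
      ∑ m ∈ Finset.range (n + 1), Real.log ((m : ℝ) + 1) := by
    rw [← Finset.sum_sub_distrib]
    refine Finset.sum_congr rfl fun m _ => ?_
    have hm : (0 : ℝ) ≤ m := by positivity
    rw [← Real.log_div (by linarith) (by linarith)]
    congr 1
    field_simp
    ring
  have e4 : ∑ m ∈ Finset.range (n + 1), x / ((m : ℝ) + 1) =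
      x * ∑ m ∈ Finset.range (n + 1), 1 / ((m : ℝ) + 1) := by
    rw [Finset.mul_sum]
    exact Finset.sum_congr rfl fun m _ => by ring
  rw [e3, e4, e1, Real.BohrMollerup.logGammaSeq, e2]
  push_cast
  ring

lemma logGamma_hasSum (x : ℝ) (hx : |x| < 1) :
    HasSum (fun n : ℕ => gco n * x ^ n) (Real.log (Real.Gamma (1 - x))) := by
  let F : ℕ × ℕ → ℝ := fun p => (x / ((p.1 : ℝ) + 1)) ^ (p.2 + 2) / ((p.2 : ℝ) + 2)
  have hF : Summable F := by
    have hs : Summable fun p : ℕ × ℕ => (1 / ((p.1 : ℝ) + 1) ^ 2) * |x| ^ p.2 :=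
      (zsum_summable 2 le_rfl).mul_of_nonneg (summable_geometric_of_lt_one (abs_nonneg x) hx)
        (fun m => by positivity) (fun m => by positivity)
    refine Summable.of_norm_bounded hs fun p => ?_
    obtain ⟨m, j⟩ := p
    have hm : (1 : ℝ) ≤ (m : ℝ) + 1 := by linarith [show (0 : ℝ) ≤ m by positivity]
    simp only [F, norm_div, norm_pow, Real.norm_eq_abs]
    have hj : |(j : ℝ) + 2| = j + 2 := abs_of_pos (by positivity)
    rw [hj, abs_of_pos (show (0 : ℝ) < m + 1 by positivity), div_pow]
    rw [div_div, ← one_div_mul_eq_div]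
    have h1 : |x| ^ (j + 2) ≤ |x| ^ j := pow_le_pow_of_le_one (abs_nonneg x) hx.le (by omega)
    have h2 : ((m : ℝ) + 1) ^ 2 ≤ ((m : ℝ) + 1) ^ (j + 2) * (j + 2) := by
      have := pow_le_pow_right₀ hm (show 2 ≤ j + 2 by omega)
      have : (1 : ℝ) ≤ j + 2 := by linarith [show (0 : ℝ) ≤ j by positivity]
      nlinarith [show (0 : ℝ) ≤ ((m : ℝ) + 1) ^ (j + 2) by positivity]
    exact mul_le_mul (one_div_le_one_div_of_le (by positivity) h2) h1 (by positivity)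
      (by positivity)
  have hrow : ∀ m : ℕ, HasSum (fun j => F (m, j))
      (-Real.log (1 - x / ((m : ℝ) + 1)) - x / ((m : ℝ) + 1)) := by
    intro m
    have hm : (1 : ℝ) ≤ (m : ℝ) + 1 := by linarith [show (0 : ℝ) ≤ m by positivity]
    have : |x / ((m : ℝ) + 1)| < 1 := by
      rw [abs_div, abs_of_pos (show (0 : ℝ) < m + 1 by positivity), div_lt_one (by positivity)]
      linarith
    have h := (hasSum_nat_add_iff' 1).2 (Real.hasSum_pow_div_log_of_abs_lt_one this)
    simp only [Finset.sum_range_one, zero_add, pow_one, Nat.cast_zero, div_one] at h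
    convert! h using 2 with j
    simp only [F]
    push_cast
    ring
  have hcol : ∀ j : ℕ, HasSum (fun m => F (m, j)) (gco (j + 2) * x ^ (j + 2)) := by
    intro j
    have h := ((zsum_summable (j + 2) (by omega)).hasSum).mul_right (x ^ (j + 2) / ((j : ℝ) + 2))
    convert! h using 1
    · ext m
      simp only [F, div_pow]
      ring
    · simp only [gco, zsum]
      simp
      ring
  have hT := hF.hasSum
  have hT1 := hT.prod_fiberwise hrow
  have hT2 := (((Equiv.prodComm ℕ ℕ).hasSum_iff).2 hT).prod_fiberwise hcol
  have hu := tendsto_nhds_unique (logGamma_tendsto x hx)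
    ((Filter.tendsto_add_atTop_iff_nat 1).2 hT1.tendsto_sum_nat)
  rw [← hu] at hT2
  have := (hasSum_nat_add_iff (f := fun n : ℕ => gco n * x ^ n) 2).1 hT2
  convert! this using 1
  simp [Finset.sum_range_succ, gco]

lemma zsum_eq (j : ℕ) (hj : 2 ≤ j) : (zsum j : ℂ) = riemannZeta j := by
  rw [zeta_nat_eq_tsum_of_gt_one (by omega), zsum, Complex.ofReal_tsum]
  have : Summable fun n : ℕ => 1 / (n : ℂ) ^ j := by
    have := (Real.summable_one_div_nat_pow.2 (show 1 < j by omega))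
    have := Complex.ofRealCLM.summable this
    simpa using this
  rw [this.tsum_eq_zero_add]
  simp [show j ≠ 0 by omega]

lemma zsum_three : zsum 3 = (riemannZeta ((3 : ℝ) : ℂ)).re := by
  have := zsum_eq 3 (by norm_num)
  push_cast at this ⊢
  rw [← this, Complex.ofReal_re]

lemma zsum_two : zsum 2 = Real.pi ^ 2 / 6 := by
  have := zsum_eq 2 (by norm_num)
  push_cast at this
  rw [riemannZeta_two] at this
  exact_mod_cast this

lemma zsum_four : zsum 4 = Real.pi ^ 4 / 90 := by
  have := zsum_eq 4 (by norm_num)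
  push_cast at this
  rw [riemannZeta_four] at this
  exact_mod_cast this

lemma zsum_six : zsum 6 = Real.pi ^ 6 / 945 := by
  have := zsum_eq 6 (by norm_num)
  have h2 := riemannZeta_two_mul_nat (k := 3) (by norm_num)
  have hb : bernoulli 6 = 1 / 42 := by
    rw [bernoulli_eq_bernoulli'_of_ne_one (by norm_num)]
    have h5 : bernoulli' 5 = 0 := by
      have := bernoulli'_eq_zero_of_odd (n := 5) (by decide) (by norm_num)
      exact this
    rw [bernoulli'_def]
    norm_num [Finset.sum_range_succ, Nat.choose_eq_descFactorial_div_factorial, h5, Nat.descFactorial, Nat.factorial]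
  norm_num [hb, Nat.factorial] at h2 this
  rw [h2] at this
  have h3 : ((zsum 6 : ℝ) : ℂ) = ((Real.pi ^ 6 / 945 : ℝ) : ℂ) := by
    rw [this]; push_cast; ring
  exact_mod_cast h3

lemma intK (r a : ℝ) (hr : r < 1) (ha : 0 < a) :
    IntegrableOn (fun u : ℝ => u ^ (-r) * Real.exp (-(a * u))) (Set.Ioi 0) := by
  have := integrableOn_rpow_mul_exp_neg_mul_rpow (p := 1) (s := -r) (by linarith) one_pos ha
  simpa using this

lemma intKc (r : ℝ) (z : ℂ) (hr : r < 1) (hz : 0 < z.re) :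
    IntegrableOn (fun u : ℝ => ((u ^ (-r) : ℝ) : ℂ) * Complex.exp (-(z * u))) (Set.Ioi 0) := by
  refine (intK r z.re hr hz).mono' ?_ ?_
  · refine Measurable.aestronglyMeasurable ?_
    fun_prop
  · refine (ae_restrict_mem measurableSet_Ioi).mono fun u hu => ?_
    have hu' : (0 : ℝ) < u := hu
    rw [norm_mul, Complex.norm_exp, Complex.norm_real, Real.norm_of_nonneg (by positivity)]
    simp

lemma valK (r : ℝ) (z : ℂ) (hr : r < 1) (hz : 0 < z.re) :
    ∫ u in Set.Ioi (0 : ℝ), ((u ^ (-r) : ℝ) : ℂ) * Complex.exp (-(z * u)) =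
      (Real.Gamma (1 - r) : ℂ) * z ^ ((r : ℂ) - 1) := by
  let f : ℝ → NNReal := fun u => Real.toNNReal (u ^ (-r))
  have hf : Measurable f := by fun_prop
  let μ : Measure ℝ := (volume.restrict (Set.Ioi (0 : ℝ))).withDensity (fun u => f u)
  let Y : ℝ → ℝ := fun u => -u
  have hval : ∀ w : ℂ, complexMGF Y μ w =
      ∫ u in Set.Ioi (0 : ℝ), ((u ^ (-r) : ℝ) : ℂ) * Complex.exp (-(w * u)) := by
    intro w
    rw [complexMGF, integral_withDensity_eq_integral_smul hf]
    refine setIntegral_congr_fun measurableSet_Ioi fun u hu => ?_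
    have hu' : (0 : ℝ) < u := hu
    simp only [f, Y, NNReal.smul_def, Complex.real_smul]
    rw [Real.coe_toNNReal _ (by positivity)]
    simp
  have hset : Set.Ioi 0 ⊆ interior (integrableExpSet Y μ) := by
    rw [isOpen_Ioi.subset_interior_iff]
    intro a ha
    have ha' : 0 < a := ha
    change Integrable _ _
    rw [integrable_withDensity_iff_integrable_smul hf]
    refine (intK r a hr ha').congr ?_
    refine (ae_restrict_mem measurableSet_Ioi).mono fun u hu => ?_
    have hu' : (0 : ℝ) < u := hu
    simp only [f, Y, NNReal.smul_def]
    rw [Real.coe_toNNReal _ (by positivity)]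
    simp
  have hA : AnalyticOnNhd ℂ (complexMGF Y μ) {w : ℂ | 0 < w.re} :=
    analyticOnNhd_complexMGF.mono fun w hw => hset hw
  have hB : AnalyticOnNhd ℂ (fun w : ℂ => (Real.Gamma (1 - r) : ℂ) * w ^ ((r : ℂ) - 1))
      {w : ℂ | 0 < w.re} := by
    refine DifferentiableOn.analyticOnNhd ?_ (isOpen_lt continuous_const Complex.continuous_re)
    intro w hw
    refine DifferentiableAt.differentiableWithinAt ?_
    refine DifferentiableAt.const_mul ?_ _
    exact DifferentiableAt.cpow differentiableAt_id (differentiableAt_const _) (Or.inl hw)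
  have hC : IsPreconnected {w : ℂ | 0 < w.re} := (convex_halfSpace_re_gt 0).isPreconnected
  have hT : Filter.Tendsto (fun x : ℝ => (x : ℂ)) (nhdsWithin 1 {1}ᶜ) (nhdsWithin 1 {1}ᶜ) := by
    refine tendsto_nhdsWithin_iff.2 ⟨?_, ?_⟩
    · refine Filter.Tendsto.mono_left ?_ nhdsWithin_le_nhds
      have := Complex.continuous_ofReal.tendsto 1
      simpa using this
    · filter_upwards [self_mem_nhdsWithin] with x hx
      simpa using hx
  have hE := hA.eqOn_of_preconnected_of_frequently_eq hB hC (z₀ := 1) (by simp) (by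
    refine hT.frequently (Filter.Eventually.frequently ?_)
    have : ∀ᶠ x : ℝ in nhdsWithin 1 {1}ᶜ, 0 < x :=
      nhdsWithin_le_nhds (lt_mem_nhds one_pos)
    filter_upwards [this] with x hx
    rw [hval]
    have h := Complex.integral_cpow_mul_exp_neg_mul_Ioi (a := 1 - r) (r := x) (by simpa using hr) hx
    rw [show (1 : ℂ) - r = ((1 - r : ℝ) : ℂ) by push_cast; rfl, Complex.Gamma_ofReal] at h
    rw [mul_comm, show (r : ℂ) - 1 = -((1 - r : ℝ) : ℂ) by push_cast; ring, Complex.cpow_neg,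
      ← Complex.inv_cpow, ← one_div, ← h]
    · refine setIntegral_congr_fun measurableSet_Ioi fun u hu => ?_
      have hu' : (0 : ℝ) < u := hu
      rw [Complex.ofReal_cpow hu'.le]
      push_cast
      congr 2
      ring
    · rw [Complex.arg_ofReal_of_nonneg hx.le]; exact Real.pi_pos.ne)
  rw [← hval]
  exact hE hz

lemma norm_one_sub_exp (w : ℂ) (hw : 0 ≤ w.re) : ‖1 - Complex.exp (-w)‖ ≤ 2 * min 1 ‖w‖ := by
  have h1 : ‖1 - Complex.exp (-w)‖ ≤ 2 := by
    refine (norm_sub_le _ _).trans ?_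
    rw [Complex.norm_exp, norm_one]
    have : Real.exp ((-w).re) ≤ 1 := Real.exp_le_one_iff.2 (by simpa using hw)
    linarith
  rcases le_total 1 ‖w‖ with h | h
  · rw [min_eq_left h]; linarith
  · rw [min_eq_right h, norm_sub_rev]
    have := Complex.norm_exp_sub_one_le (x := -w) (by simpa using h)
    simpa using this

lemma intMin (r M : ℝ) (h0 : 0 < r) (h1 : r < 1) (hM : 0 ≤ M) :
    IntegrableOn (fun u : ℝ => 2 * min 1 (M * u) * u ^ (-1 - r)) (Set.Ioi 0) := by
  rw [← Set.Ioc_union_Ioi_eq_Ioi zero_le_one]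
  refine IntegrableOn.union ?_ ?_
  · have : IntegrableOn (fun u : ℝ => 2 * M * u ^ (-r)) (Set.Ioc 0 1) := by
      refine Integrable.const_mul ?_ _
      exact (intervalIntegral.intervalIntegrable_rpow' (a := 0) (b := 1) (by linarith)).1
    refine this.mono' (Measurable.aestronglyMeasurable (by fun_prop)) ?_
    refine (ae_restrict_mem measurableSet_Ioc).mono fun u hu => ?_
    have hu' : (0 : ℝ) < u := hu.1
    rw [Real.norm_of_nonneg (by positivity)]
    have : u ^ (-r) = u * u ^ (-1 - r) := by
      rw [← Real.rpow_one_add' hu'.le (by linarith)]; congr 1; ring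
    rw [this]
    have h3 : min 1 (M * u) ≤ M * u := min_le_right _ _
    have h4 : 0 < u ^ (-1 - r) := by positivity
    nlinarith
  · have : IntegrableOn (fun u : ℝ => 2 * u ^ (-1 - r)) (Set.Ioi 1) :=
      (integrableOn_Ioi_rpow_of_lt (by linarith) one_pos).const_mul _
    refine this.mono' (Measurable.aestronglyMeasurable (by fun_prop)) ?_
    refine (ae_restrict_mem measurableSet_Ioi).mono fun u hu => ?_
    have hu' : (0 : ℝ) < u := one_pos.trans hu
    rw [Real.norm_of_nonneg (by positivity)]
    have h3 : min 1 (M * u) ≤ 1 := min_le_left _ _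
    have h4 : 0 < u ^ (-1 - r) := by positivity
    nlinarith

lemma boundJ (r : ℝ) (z : ℂ) (M : ℝ) (hz : 0 ≤ z.re) (hM : ‖z‖ ≤ M) (u : ℝ)
    (hu : 0 < u) : ‖(1 - Complex.exp (-(z * u))) * ((u ^ (-1 - r) : ℝ) : ℂ)‖ ≤
      2 * min 1 (M * u) * u ^ (-1 - r) := by
  rw [norm_mul, Complex.norm_real, Real.norm_of_nonneg (show 0 ≤ u ^ (-1 - r) by positivity)]
  gcongr
  refine (norm_one_sub_exp _ (by simp; positivity)).trans ?_
  rw [norm_mul, Complex.norm_real, Real.norm_of_nonneg hu.le]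
  gcongr

lemma intJ (r : ℝ) (z : ℂ) (h0 : 0 < r) (h1 : r < 1) (hz : 0 ≤ z.re) :
    IntegrableOn (fun u : ℝ => (1 - Complex.exp (-(z * u))) * ((u ^ (-1 - r) : ℝ) : ℂ))
      (Set.Ioi 0) := by
  refine (intMin r ‖z‖ h0 h1 (norm_nonneg _)).mono'
    (Measurable.aestronglyMeasurable (by fun_prop)) ?_
  exact (ae_restrict_mem measurableSet_Ioi).mono fun u hu => boundJ r z _ hz le_rfl u hu

lemma valJ_pos (r : ℝ) (z : ℂ) (h0 : 0 < r) (h1 : r < 1) (hz : 0 < z.re) :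
    ∫ u in Set.Ioi (0 : ℝ), (1 - Complex.exp (-(z * u))) * ((u ^ (-1 - r) : ℝ) : ℂ) =
      (Real.Gamma (1 - r) / r : ℝ) * z ^ (r : ℂ) := by
  let F : ℝ → ℂ := fun u => (1 - Complex.exp (-(z * u))) * ((u ^ (-r) : ℝ) : ℂ)
  have hz0 : z ≠ 0 := by rintro rfl; simp at hz
  have hd : ∀ u ∈ Set.Ioi (0 : ℝ), HasDerivAt F (z * (((u ^ (-r) : ℝ) : ℂ) * Complex.exp (-(z * u)))
      - r * ((1 - Complex.exp (-(z * u))) * ((u ^ (-1 - r) : ℝ) : ℂ))) u := by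
    intro u hu
    have hu' : (0 : ℝ) < u := hu
    have e1 : HasDerivAt (fun u : ℝ => 1 - Complex.exp (-(z * u)))
        (-(Complex.exp (-(z * u)) * (-(z * 1)))) u := by
      have := ((((hasDerivAt_id u).ofReal_comp).const_mul z).neg.cexp).const_sub 1
      simpa using this
    have e2 := (Real.hasDerivAt_rpow_const (x := u) (p := -r) (Or.inl hu'.ne')).ofReal_comp
    have := e1.mul e2
    convert! this using 1
    rw [show -1 - r = -r - 1 by ring]
    push_cast
    ring
  have hi : IntegrableOn (fun u : ℝ => z * (((u ^ (-r) : ℝ) : ℂ) * Complex.exp (-(z * u)))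
      - r * ((1 - Complex.exp (-(z * u))) * ((u ^ (-1 - r) : ℝ) : ℂ))) (Set.Ioi 0) :=
    ((intKc r z h1 hz).const_mul z).sub ((intJ r z h0 h1 hz.le).const_mul (r : ℂ))
  have hF0 : F 0 = 0 := by simp [F]
  have hbd : ∀ u : ℝ, 0 < u → ‖F u‖ ≤ 2 * min 1 (‖z‖ * u) * u ^ (-r) := by
    intro u hu
    have := boundJ (r - 1) z ‖z‖ hz.le le_rfl u hu
    rwa [show -1 - (r - 1) = -r by ring] at this
  have hc : ContinuousWithinAt F (Set.Ici 0) 0 := by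
    rw [ContinuousWithinAt, hF0]
    have hlim : Filter.Tendsto (fun u : ℝ => 2 * ‖z‖ * u ^ (1 - r)) (nhdsWithin 0 (Set.Ici 0))
        (nhds 0) := by
      have : ContinuousAt (fun u : ℝ => 2 * ‖z‖ * u ^ (1 - r)) 0 :=
        continuousAt_const.mul (Real.continuousAt_rpow_const _ _ (Or.inr (by linarith)))
      have h := this.tendsto
      simp only [Real.zero_rpow (show 1 - r ≠ 0 by linarith), mul_zero] at h
      exact h.mono_left nhdsWithin_le_nhds
    refine squeeze_zero_norm' ?_ hlim
    filter_upwards [self_mem_nhdsWithin] with u hu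
    rcases eq_or_lt_of_le (show (0 : ℝ) ≤ u from hu) with h | h
    · rw [← h, hF0, Real.zero_rpow (by linarith)]; simp
    · refine (hbd u h).trans ?_
      rw [show 1 - r = 1 + -r by ring, Real.rpow_one_add' h.le (by linarith), ← mul_assoc]
      have h3 : min 1 (‖z‖ * u) ≤ ‖z‖ * u := min_le_right _ _
      exact mul_le_mul_of_nonneg_right (by linarith) (by positivity)
  have ht : Filter.Tendsto F Filter.atTop (nhds 0) := by
    have hlim : Filter.Tendsto (fun u : ℝ => 2 * u ^ (-r)) Filter.atTop (nhds 0) := by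
      simpa using (tendsto_rpow_neg_atTop h0).const_mul 2
    refine squeeze_zero_norm' ?_ hlim
    filter_upwards [Filter.eventually_gt_atTop 0] with u hu
    refine (hbd u hu).trans ?_
    gcongr
    have : min 1 (‖z‖ * u) ≤ 1 := min_le_left _ _
    linarith
  have h := integral_Ioi_of_hasDerivAt_of_tendsto hc hd hi ht
  rw [hF0, sub_zero, integral_sub ((intKc r z h1 hz).const_mul z)
    ((intJ r z h0 h1 hz.le).const_mul (r : ℂ)), integral_const_mul, integral_const_mul,
    valK r z h1 hz] at h
  have hr : (r : ℂ) ≠ 0 := by exact_mod_cast h0.ne'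
  have e : z ^ (r : ℂ) = z * z ^ ((r : ℂ) - 1) := by
    rw [Complex.cpow_sub _ _ hz0, Complex.cpow_one]; field_simp
  push_cast
  rw [e]
  field_simp
  linear_combination -h

lemma valJ (r : ℝ) (z : ℂ) (h0 : 0 < r) (h1 : r < 1) (hz : 0 ≤ z.re) (hz0 : z ≠ 0) :
    ∫ u in Set.Ioi (0 : ℝ), (1 - Complex.exp (-(z * u))) * ((u ^ (-1 - r) : ℝ) : ℂ) =
      (Real.Gamma (1 - r) / r : ℝ) * z ^ (r : ℂ) := by
  have hsl : z ∈ Complex.slitPlane := by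
    rw [Complex.mem_slitPlane_iff]
    rcases eq_or_lt_of_le hz with h | h
    · right
      intro h'
      exact hz0 (Complex.ext h.symm h')
    · exact Or.inl h
  have hze : Filter.Tendsto (fun e : ℝ => z + e) (nhdsWithin 0 (Set.Ioi 0)) (nhds z) := by
    have : Continuous (fun e : ℝ => z + e) := by fun_prop
    have := this.tendsto 0
    simp only [Complex.ofReal_zero, add_zero] at this
    exact this.mono_left nhdsWithin_le_nhds
  have hR : Filter.Tendsto (fun e : ℝ => ((Real.Gamma (1 - r) / r : ℝ) : ℂ) * (z + e) ^ (r : ℂ))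
      (nhdsWithin 0 (Set.Ioi 0)) (nhds ((Real.Gamma (1 - r) / r : ℝ) * z ^ (r : ℂ))) :=
    (((continuousAt_cpow_const hsl).tendsto).comp hze).const_mul _
  have hL : Filter.Tendsto (fun e : ℝ => ∫ u in Set.Ioi (0 : ℝ),
      (1 - Complex.exp (-((z + e) * u))) * ((u ^ (-1 - r) : ℝ) : ℂ))
      (nhdsWithin 0 (Set.Ioi 0)) (nhds (∫ u in Set.Ioi (0 : ℝ),
      (1 - Complex.exp (-(z * u))) * ((u ^ (-1 - r) : ℝ) : ℂ))) := by
    refine tendsto_integral_filter_of_dominated_convergence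
      (fun u => 2 * min 1 ((‖z‖ + 1) * u) * u ^ (-1 - r)) ?_ ?_ ?_ ?_
    · exact Filter.Eventually.of_forall fun e =>
        Measurable.aestronglyMeasurable (by fun_prop)
    · have : ∀ᶠ e : ℝ in nhdsWithin 0 (Set.Ioi 0), e < 1 :=
        nhdsWithin_le_nhds (gt_mem_nhds one_pos)
      filter_upwards [self_mem_nhdsWithin, this] with e he he1
      have he' : 0 < e := he
      refine (ae_restrict_mem measurableSet_Ioi).mono fun u hu => ?_
      refine boundJ r _ _ (by simp; linarith) ?_ u hu
      refine (norm_add_le _ _).trans ?_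
      rw [Complex.norm_real, Real.norm_of_nonneg he'.le]
      linarith
    · exact intMin r _ h0 h1 (by positivity)
    · refine Filter.Eventually.of_forall fun u => ?_
      have hc : Continuous (fun w : ℂ => (1 - Complex.exp (-(w * u))) * ((u ^ (-1 - r) : ℝ) : ℂ)) := by
        fun_prop
      exact (hc.tendsto z).comp hze
  refine tendsto_nhds_unique hL (hR.congr' ?_)
  filter_upwards [self_mem_nhdsWithin] with e he
  have he' : 0 < e := he
  exact (valJ_pos r _ h0 h1 (by simp; linarith)).symm

lemma intA (α s : ℝ) (w : ℂ) (hα : 0 < α) (h0 : 0 < s) (h1 : s < α) (hw : |w.im| ≤ Real.pi / 2) :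
    IntegrableOn (fun k : ℝ => (1 - (Complex.exp (-(Complex.exp w * ((k ^ α : ℝ) : ℂ)))).re) *
      k ^ (-1 - s)) (Set.Ioi 0) ∧
    ∫ k in Set.Ioi (0 : ℝ), (1 - (Complex.exp (-(Complex.exp w * ((k ^ α : ℝ) : ℂ)))).re) *
      k ^ (-1 - s) = Real.Gamma (1 - s / α) / s *
        (Real.exp (s / α * w.re) * Real.cos (s / α * w.im)) := by
  have hpi := Real.pi_pos
  have hw' := abs_le.1 hw
  have hz : 0 ≤ (Complex.exp w).re := by
    rw [Complex.exp_re]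
    exact mul_nonneg (Real.exp_pos _).le (Real.cos_nonneg_of_mem_Icc ⟨by linarith, by linarith⟩)
  have hz0 := Complex.exp_ne_zero w
  have hr0 : 0 < s / α := by positivity
  have hr1 : s / α < 1 := (div_lt_one hα).2 h1
  let g : ℝ → ℂ := fun u => (1 - Complex.exp (-(Complex.exp w * u))) *
    ((u ^ (-1 - s / α) : ℝ) : ℂ)
  have hg : IntegrableOn g (Set.Ioi 0) := intJ (s / α) _ hr0 hr1 hz
  have hgv : ∫ u in Set.Ioi (0 : ℝ), g u = _ := valJ (s / α) _ hr0 hr1 hz hz0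
  have hg2 := (integrableOn_Ioi_comp_rpow_iff g hα.ne').2 hg
  rw [← integral_comp_rpow_Ioi g hα.ne'] at hgv
  have hre : ∀ k ∈ Set.Ioi (0 : ℝ), (1 - (Complex.exp (-(Complex.exp w * ((k ^ α : ℝ) : ℂ)))).re) *
      k ^ (-1 - s) = α⁻¹ * ((|α| * k ^ (α - 1)) • g (k ^ α)).re := by
    intro k hk
    have hk' : (0 : ℝ) < k := hk
    simp only [g]
    rw [← Real.rpow_mul hk'.le, Complex.real_smul, Complex.re_ofReal_mul, Complex.re_mul_ofReal,
      abs_of_pos hα]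
    have : k ^ (-1 - s) = k ^ (α - 1) * k ^ (α * (-1 - s / α)) := by
      rw [← Real.rpow_add hk']
      congr 1
      field_simp
      ring
    rw [this, Complex.sub_re, Complex.one_re]
    field_simp
  constructor
  · refine IntegrableOn.congr_fun (Integrable.const_mul hg2.re α⁻¹) (fun k hk => (hre k hk).symm)
      measurableSet_Ioi
  · rw [setIntegral_congr_fun measurableSet_Ioi hre, integral_const_mul]
    have h := integral_re hg2
    simp only [RCLike.re_eq_complex_re] at h
    rw [h, hgv, Complex.re_ofReal_mul, Complex.cpow_def_of_ne_zero hz0,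
      Complex.log_exp (by linarith) (by linarith), Complex.exp_re, Complex.re_mul_ofReal,
      Complex.im_mul_ofReal, mul_comm w.re, mul_comm w.im]
    field_simp

lemma intCos (s x : ℝ) (h0 : 0 < s) (h1 : s < 1) (hx : x ≠ 0) :
    ∫ k in Set.Ioi (0 : ℝ), (1 - Real.cos (k * x)) * k ^ (-1 - s) =
      Real.Gamma (1 - s) / s * Real.cos (Real.pi / 2 * s) * Real.exp (s * Real.log |x|) := by
  have hpi := Real.pi_pos
  have h := (intA 1 s ((Real.log |x| : ℝ) + ((Real.pi / 2 : ℝ) : ℂ) * Complex.I) one_pos h0 h1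
    (by simp [abs_of_pos (half_pos hpi)])).2
  have e : Complex.exp ((Real.log |x| : ℝ) + ((Real.pi / 2 : ℝ) : ℂ) * Complex.I) =
      (|x| : ℝ) * Complex.I := by
    rw [Complex.exp_add, ← Complex.ofReal_exp, Real.exp_log (by positivity)]
    push_cast
    rw [Complex.exp_pi_div_two_mul_I]
  rw [e] at h
  simp only [div_one, Real.rpow_one] at h
  have e2 : ∀ k : ℝ, (Complex.exp (-((|x| : ℝ) * Complex.I * (k : ℂ)))).re = Real.cos (k * x) := by
    intro k
    rw [Complex.exp_re]
    simp
    rw [← Real.cos_abs (k * x), abs_mul, ← Real.cos_abs (|x| * k), abs_mul, abs_abs, mul_comm]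
  simp only [e2] at h
  rw [h]
  simp
  ring_nf

lemma moment_formula {Ω : Type*} [MeasurableSpace Ω] (μ : Measure Ω) [IsProbabilityMeasure μ]
    (X : Ω → ℝ) (hX : Measurable X) (hX0 : ∀ᵐ ω ∂μ, X ω ≠ 0) (α s : ℝ) (w : ℂ) (hα : 0 < α)
    (h0 : 0 < s) (h1 : s < α) (h2 : s < 1) (hw : |w.im| ≤ Real.pi / 2)
    (hc : ∀ k : ℝ, 0 < k → ∫ ω, Real.cos (k * X ω) ∂μ =
      (Complex.exp (-(Complex.exp w * ((k ^ α : ℝ) : ℂ)))).re) :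
    Integrable (fun ω => Real.exp (s * Real.log |X ω|)) μ ∧
    Real.Gamma (1 - s) * Real.cos (Real.pi / 2 * s) * ∫ ω, Real.exp (s * Real.log |X ω|) ∂μ =
      Real.Gamma (1 - s / α) *
        (Real.exp (s / α * w.re) * Real.cos (s / α * w.im)) := by
  have hpi := Real.pi_pos
  obtain ⟨hA1, hA2⟩ := intA α s w hα h0 h1 hw
  let f : Ω × ℝ → ℝ := fun p => (1 - Real.cos (p.2 * X p.1)) * p.2 ^ (-1 - s)
  have hfm : Measurable f := by fun_prop
  have hci : ∀ k : ℝ, Integrable (fun ω => Real.cos (k * X ω)) μ := by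
    intro k
    refine Integrable.of_bound (C := 1) (Measurable.aestronglyMeasurable (by fun_prop)) ?_
    exact Filter.Eventually.of_forall fun ω => Real.abs_cos_le_one _
  have hsec : ∀ k : ℝ, Integrable (fun ω => f (ω, k)) μ := fun k => by
    have : Integrable (fun ω => (1 : ℝ) - Real.cos (k * X ω)) μ := (integrable_const 1).sub (hci k)
    exact this.mul_const (k ^ (-1 - s))
  have hsecv : ∀ k : ℝ, 0 < k → ∫ ω, f (ω, k) ∂μ =
      (1 - (Complex.exp (-(Complex.exp w * ((k ^ α : ℝ) : ℂ)))).re) * k ^ (-1 - s) := by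
    intro k hk
    simp only [f]
    rw [integral_mul_const, integral_sub (integrable_const 1) (hci k), hc k hk]
    simp
  have hnn : ∀ ω, ∀ k : ℝ, 0 < k → 0 ≤ f (ω, k) := by
    intro ω k hk
    have := Real.cos_le_one (k * X ω)
    simp only [f]
    exact mul_nonneg (by linarith) (by positivity)
  have hint : Integrable f (μ.prod (volume.restrict (Set.Ioi (0 : ℝ)))) := by
    rw [integrable_prod_iff' hfm.aestronglyMeasurable]
    refine ⟨Filter.Eventually.of_forall hsec, ?_⟩
    refine hA1.congr ?_
    refine (ae_restrict_mem measurableSet_Ioi).mono fun k hk => ?_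
    simp only
    rw [← hsecv k hk]
    refine integral_congr_ae (Filter.Eventually.of_forall fun ω => ?_)
    exact (Real.norm_of_nonneg (hnn ω k hk)).symm
  have hin : ∀ᵐ ω ∂μ, ∫ k in Set.Ioi (0 : ℝ), f (ω, k) =
      Real.Gamma (1 - s) / s * Real.cos (Real.pi / 2 * s) * Real.exp (s * Real.log |X ω|) := by
    filter_upwards [hX0] with ω hω
    have := intCos s (X ω) h0 h2 hω
    simp only [f]
    exact this
  have hG : 0 < Real.Gamma (1 - s) := Real.Gamma_pos_of_pos (by linarith)
  have hC : 0 < Real.cos (Real.pi / 2 * s) :=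
    Real.cos_pos_of_mem_Ioo ⟨by nlinarith, by nlinarith⟩
  have hcst : Real.Gamma (1 - s) / s * Real.cos (Real.pi / 2 * s) ≠ 0 := by positivity
  constructor
  · have h := (hint.integral_prod_left.congr hin).const_mul
      (Real.Gamma (1 - s) / s * Real.cos (Real.pi / 2 * s))⁻¹
    refine h.congr (Filter.Eventually.of_forall fun ω => ?_)
    exact inv_mul_cancel_left₀ hcst _
  · have h := integral_integral_swap (f := fun ω k => f (ω, k)) hint
    rw [integral_congr_ae hin, integral_const_mul,
      setIntegral_congr_fun measurableSet_Ioi (fun k hk => hsecv k hk), hA2] at h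
    generalize (∫ ω, Real.exp (s * Real.log |X ω|) ∂μ) = J at *
    have hs : s ≠ 0 := h0.ne'
    clear hin hcst hA1 hA2 hsecv hG hC
    generalize Real.Gamma (1 - s) = A1 at *
    generalize Real.Gamma (1 - s / α) = A2 at *
    generalize Real.cos (Real.pi / 2 * s) = A3 at *
    generalize Real.exp (s / α * w.re) * Real.cos (s / α * w.im) = A4 at *
    field_simp at h
    linear_combination h

lemma iteratedDeriv_of_hasSum (L : ℝ → ℝ) (a : ℕ → ℝ) (δ : ℝ) (hδ : 0 < δ)
    (h : ∀ s, |s| < δ → HasSum (fun n => a n * s ^ n) (L s)) :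
    AnalyticAt ℝ L 0 ∧ ∀ n : ℕ, iteratedDeriv n L 0 = n.factorial * a n := by
  have hp : HasFPowerSeriesAt L (FormalMultilinearSeries.ofScalars ℝ a) 0 := by
    rw [hasFPowerSeriesAt_iff]
    have : ∀ᶠ s : ℝ in nhds 0, |s| < δ := by
      have := Metric.ball_mem_nhds (0 : ℝ) hδ
      filter_upwards [this] with s hs
      simpa using hs
    filter_upwards [this] with s hs
    have := h s hs
    simpa [mul_comm] using this
  refine ⟨hp.analyticAt, fun n => ?_⟩
  have e := HasFPowerSeriesAt.eq_formalMultilinearSeries hp hp.analyticAt.hasFPowerSeriesAt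
  have e2 := congrArg (fun p => FormalMultilinearSeries.coeff p n) e
  simp only [FormalMultilinearSeries.coeff_ofScalars] at e2
  rw [e2]
  have : (n.factorial : ℝ) ≠ 0 := by positivity
  field_simp

lemma exp_comp_rec (L : ℝ → ℝ) (hL : AnalyticAt ℝ L 0) (n : ℕ) :
    iteratedDeriv (n + 1) (fun s => Real.exp (L s)) 0 =
      ∑ i ∈ Finset.range (n + 1), (n.choose i : ℝ) * iteratedDeriv (i + 1) L 0 *
        iteratedDeriv (n - i) (fun s => Real.exp (L s)) 0 := by
  have hM : AnalyticAt ℝ (fun s => Real.exp (L s)) 0 := hL.rexp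
  have hd : deriv (fun s => Real.exp (L s)) =ᶠ[nhds 0] deriv L * (fun s => Real.exp (L s)) := by
    filter_upwards [hL.eventually_analyticAt] with s hs
    have := hs.differentiableAt.hasDerivAt.exp.deriv
    rw [this, Pi.mul_apply, mul_comm]
  rw [iteratedDeriv_succ', hd.iteratedDeriv_eq, iteratedDeriv_mul hL.deriv.contDiffAt hM.contDiffAt]
  simp only [iteratedDeriv_succ']

lemma exp_comp_six (L : ℝ → ℝ) (hL : AnalyticAt ℝ L 0) (h0 : iteratedDeriv 0 L 0 = 0)
    (h1 : iteratedDeriv 1 L 0 = 0) :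
    iteratedDeriv 6 (fun s => Real.exp (L s)) 0 =
      15 * iteratedDeriv 2 L 0 ^ 3 + 15 * iteratedDeriv 4 L 0 * iteratedDeriv 2 L 0 +
      10 * iteratedDeriv 3 L 0 ^ 2 + iteratedDeriv 6 L 0 := by
  have m0 : iteratedDeriv 0 (fun s => Real.exp (L s)) 0 = 1 := by
    rw [iteratedDeriv_zero] at h0 ⊢
    simp [h0]
  have m1 := exp_comp_rec L hL 0
  have m2 := exp_comp_rec L hL 1
  have m3 := exp_comp_rec L hL 2
  have m4 := exp_comp_rec L hL 3
  have m6 := exp_comp_rec L hL 5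
  simp only [Finset.sum_range_succ, Finset.sum_range_zero, Nat.reduceAdd, Nat.reduceSub,
    h1, m0, Nat.choose_self, Nat.choose_zero_right, Nat.choose_one_right, 
    show Nat.choose 3 2 = 3 by decide, show Nat.choose 5 2 = 10 by decide,
    show Nat.choose 5 3 = 10 by decide, show Nat.choose 5 4 = 5 by decide] at m1 m2 m3 m4 m6
  push_cast at m1 m2 m3 m4 m6
  simp only [m1, m2, m3, m4] at m6
  rw [m6]
  ring

lemma six_limit {Ω : Type*} [MeasurableSpace Ω] (μ : Measure Ω) [IsProbabilityMeasure μ]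
    (V : Ω → ℝ) (hVm : Measurable V) (hV : Integrable (fun ω => V ω ^ 6) μ) (δ : ℝ) (hδ : 0 < δ)
    (M : ℝ → ℝ) (hM : AnalyticAt ℝ M 0)
    (h : ∀ s, 0 < s → s < δ → Integrable (fun ω => Real.exp (s * V ω)) μ ∧ mgf V μ s = M s) :
    ∫ ω, V ω ^ 6 ∂μ = iteratedDeriv 6 M 0 := by
  have hsub : Set.Ioo 0 δ ⊆ interior (integrableExpSet V μ) := by
    rw [isOpen_Ioo.subset_interior_iff]
    exact fun s hs => (h s hs.1 hs.2).1
  have hlt : ∀ᶠ s : ℝ in nhdsWithin 0 (Set.Ioi 0), s < δ / 2 :=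
    nhdsWithin_le_nhds (gt_mem_nhds (half_pos hδ))
  have hR : Filter.Tendsto (iteratedDeriv 6 M) (nhdsWithin 0 (Set.Ioi 0))
      (nhds (iteratedDeriv 6 M 0)) := by
    rw [iteratedDeriv_eq_iterate]
    exact (hM.iterated_deriv 6).continuousAt.tendsto.mono_left nhdsWithin_le_nhds
  have hL : Filter.Tendsto (fun s : ℝ => ∫ ω, V ω ^ 6 * Real.exp (s * V ω) ∂μ)
      (nhdsWithin 0 (Set.Ioi 0)) (nhds (∫ ω, V ω ^ 6 ∂μ)) := by
    refine tendsto_integral_filter_of_dominated_convergence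
      (fun ω => V ω ^ 6 + V ω ^ 6 * Real.exp (δ / 2 * V ω)) ?_ ?_ ?_ ?_
    · exact Filter.Eventually.of_forall fun e =>
        Measurable.aestronglyMeasurable (by fun_prop)
    · filter_upwards [self_mem_nhdsWithin, hlt] with s hs hs1
      have hs' : 0 < s := hs
      refine Filter.Eventually.of_forall fun ω => ?_
      have h6 : 0 ≤ V ω ^ 6 := by positivity
      rw [Real.norm_of_nonneg (by positivity)]
      have : Real.exp (s * V ω) ≤ 1 + Real.exp (δ / 2 * V ω) := by
        rcases le_total 0 (V ω) with hv | hv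
        · have : Real.exp (s * V ω) ≤ Real.exp (δ / 2 * V ω) :=
            Real.exp_le_exp.2 (by nlinarith)
          linarith
        · have : Real.exp (s * V ω) ≤ 1 := Real.exp_le_one_iff.2 (by nlinarith)
          linarith [Real.exp_pos (δ / 2 * V ω)]
      nlinarith
    · exact hV.add (integrable_pow_mul_exp_of_mem_interior_integrableExpSet
        (hsub ⟨by linarith, by linarith⟩) 6)
    · refine Filter.Eventually.of_forall fun ω => ?_
      have hc : Continuous (fun s : ℝ => V ω ^ 6 * Real.exp (s * V ω)) := by fun_prop
      have := (hc.tendsto 0).mono_left (nhdsWithin_le_nhds (s := Set.Ioi (0 : ℝ)))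
      simpa using this
  refine tendsto_nhds_unique hL (hR.congr' ?_)
  filter_upwards [self_mem_nhdsWithin, hlt] with s hs hs1
  have hs' : 0 < s := hs
  have hsI : s ∈ Set.Ioo 0 δ := ⟨hs', by linarith⟩
  have heq : mgf V μ =ᶠ[nhds s] M := by
    filter_upwards [isOpen_Ioo.mem_nhds hsI] with t ht
    exact (h t ht.1 ht.2).2
  rw [← heq.iteratedDeriv_eq, iteratedDeriv_mgf (hsub hsI)]

noncomputable def lG (x : ℝ) : ℝ := Real.log (Real.Gamma (1 - x))

lemma exp_lG (x : ℝ) (hx : x < 1) : Real.exp (lG x) = Real.Gamma (1 - x) :=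
  Real.exp_log (Real.Gamma_pos_of_pos (by linarith))

lemma lG_cos (y : ℝ) (hy : |y| < 1) :
    Real.exp (lG (y / 2) + lG (-(y / 2)) - lG y - lG (-y)) = Real.cos (Real.pi / 2 * y) := by
  have hy' := abs_lt.1 hy
  rcases eq_or_ne y 0 with rfl | h0
  · simp [lG]
  rw [Real.exp_sub, Real.exp_sub, Real.exp_add, exp_lG _ (by linarith), exp_lG _ (by linarith),
    exp_lG _ (by linarith), exp_lG _ (by linarith)]
  have hrefl : ∀ x : ℝ, x ≠ 0 → Real.Gamma (1 - x) * Real.Gamma (1 - -x) =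
      x * (Real.pi / Real.sin (Real.pi * x)) := by
    intro x hx
    rw [← Real.Gamma_mul_Gamma_one_sub, show 1 - -x = x + 1 by ring, Real.Gamma_add_one hx]
    ring
  have hs : Real.sin (Real.pi * y) ≠ 0 := by
    intro h
    obtain ⟨n, hn⟩ := Real.sin_eq_zero_iff.1 h
    have hn' : (n : ℝ) = y := by
      have := Real.pi_pos.ne'
      field_simp at hn
      linarith
    rw [← hn'] at hy h0
    have h1 : |n| < 1 := by exact_mod_cast hy
    have h2 : n = 0 := Int.abs_lt_one_iff.1 h1
    simp [h2] at h0
  have hd : Real.sin (Real.pi * y) = 2 * Real.sin (Real.pi * (y / 2)) * Real.cos (Real.pi / 2 * y) := by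
    rw [show Real.pi / 2 * y = Real.pi * (y / 2) by ring, ← Real.sin_two_mul]
    congr 1; ring
  rw [div_div, hrefl y h0, hrefl (y / 2) (by simpa using h0), hd]
  rw [hd] at hs
  have h1 : Real.sin (Real.pi * (y / 2)) ≠ 0 := fun h => hs (by rw [h]; ring)
  have h2 : Real.cos (Real.pi / 2 * y) ≠ 0 := fun h => hs (by rw [h]; ring)
  have := Real.pi_pos.ne'
  clear hd hrefl hs
  generalize Real.sin (Real.pi * (y / 2)) = S at *
  generalize Real.cos (Real.pi / 2 * y) = T at *
  field_simp

lemma charfn_re {Ω : Type*} [MeasureSpace Ω]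
    [IsProbabilityMeasure (ℙ : Measure Ω)] (X : Ω → ℝ) (hX : Measurable X) (k : ℝ) :
    ∫ ω, Real.cos (k * X ω) = (∫ ω, Complex.exp (Complex.I * (k : ℂ) * (X ω : ℂ))).re := by
  have hi : Integrable (fun ω => Complex.exp (Complex.I * (k : ℂ) * (X ω : ℂ))) := by
    refine Integrable.of_bound (C := 1) (Measurable.aestronglyMeasurable (by fun_prop)) ?_
    refine Filter.Eventually.of_forall fun ω => ?_
    rw [Complex.norm_exp]
    simp
  have h := integral_re hi
  simp only [RCLike.re_eq_complex_re] at h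
  rw [← h]
  refine integral_congr_ae (Filter.Eventually.of_forall fun ω => ?_)
  simp [Complex.exp_re]

noncomputable def Lfun (b θ s : ℝ) : ℝ :=
  lG (b * s) + (lG (θ / 2 * s) + lG (-θ / 2 * s) - lG (θ * s) - lG (-θ * s))
    - (lG (1 / 2 * s) + lG (-1 / 2 * s)) + lG (-1 * s)
    + Real.eulerMascheroniConstant * (1 - b) * s

noncomputable def Lco (b θ : ℝ) (n : ℕ) : ℝ :=
  gco n * (b ^ n + ((θ / 2) ^ n + (-θ / 2) ^ n - θ ^ n - (-θ) ^ n)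
    - ((1 / 2) ^ n + (-1 / 2) ^ n) + (-1) ^ n) +
    if n = 1 then Real.eulerMascheroniConstant * (1 - b) else 0

lemma Lfun_hasSum (b θ s : ℝ) (hb : 0 < b) (hθ : |θ| ≤ 1) (hs : |s| < min 1 b⁻¹) :
    HasSum (fun n => Lco b θ n * s ^ n) (Lfun b θ s) := by
  have hs1 : |s| < 1 := lt_of_lt_of_le hs (min_le_left _ _)
  have hs2 : |s| < b⁻¹ := lt_of_lt_of_le hs (min_le_right _ _)
  have key : ∀ c : ℝ, |c * s| < 1 → HasSum (fun n => gco n * c ^ n * s ^ n) (lG (c * s)) := by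
    intro c hc
    have := logGamma_hasSum _ hc
    simpa only [lG, mul_pow, mul_assoc] using this
  have small : ∀ c : ℝ, |c| ≤ 1 → |c * s| < 1 := by
    intro c hc
    rw [abs_mul]
    nlinarith [abs_nonneg c, abs_nonneg s]
  have hbs : |b * s| < 1 := by
    rw [abs_mul, abs_of_pos hb]
    have := mul_lt_mul_of_pos_left hs2 hb
    rwa [mul_inv_cancel₀ hb.ne'] at this
  have hθ' := abs_le.1 hθ
  have k1 := key b hbs
  have k2 := key (θ / 2) (small _ (abs_le.2 ⟨by linarith, by linarith⟩))
  have k3 := key (-θ / 2) (small _ (abs_le.2 ⟨by linarith, by linarith⟩))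
  have k4 := key θ (small _ hθ)
  have k5 := key (-θ) (small _ (by rwa [abs_neg]))
  have k6 := key (1 / 2) (small _ (abs_le.2 ⟨by linarith, by linarith⟩))
  have k7 := key (-1 / 2) (small _ (abs_le.2 ⟨by linarith, by linarith⟩))
  have k8 := key (-1) (small _ (by simp))
  have k9 : HasSum (fun n : ℕ => if n = 1 then Real.eulerMascheroniConstant * (1 - b) * s else 0)
      (Real.eulerMascheroniConstant * (1 - b) * s) :=
    hasSum_ite_eq 1 _
  have := (((k1.add (((k2.add k3).sub k4).sub k5)).sub (k6.add k7)).add k8).add k9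
  refine this.congr_fun ?_
  intro n
  simp only [Lco]
  split_ifs with h
  · subst h; ring
  · ring

lemma exp_Lfun (b θ s : ℝ) (hb : 0 < b) (hθ : |θ| ≤ 1) (h0 : 0 < s) (h1 : s < 1)
    (h2 : b * s < 1) :
    Real.exp (Lfun b θ s) * (Real.Gamma (1 - s) * Real.cos (Real.pi / 2 * s)) =
      Real.Gamma (1 - b * s) * Real.cos (Real.pi / 2 * (θ * s)) *
        Real.exp (Real.eulerMascheroniConstant * (1 - b) * s) := by
  have hθs : |θ * s| < 1 := by
    rw [abs_mul, abs_of_pos h0]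
    nlinarith [abs_nonneg θ]
  have c1 := lG_cos (θ * s) hθs
  have c2 := lG_cos s (by rwa [abs_of_pos h0])
  rw [← c1, ← c2, ← exp_lG _ h1, ← exp_lG _ h2, ← Real.exp_add, ← Real.exp_add, ← Real.exp_add,
    ← Real.exp_add]
  congr 1
  simp only [Lfun]
  ring_nf

theorem sixth_central_log_moment {Ω : Type*} [MeasureSpace Ω]
    [IsProbabilityMeasure (ℙ : Measure Ω)] (X : Ω → ℝ) (ν θ τ : ℝ)
    (hX : IsStrictlyStable X ν θ τ)
    (DV : ℝ) (hDV : DV = Real.pi ^ 2 / 4 * (1 - θ ^ 2) + Real.pi ^ 2 / 6 * (ν - 1)) :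
    (∫ ω, (Real.log |X ω| - τ) ^ 6) =
      15 * DV ^ 3 + 15 * Real.pi ^ 4 * ((1 - θ ^ 4) / 8 + (ν ^ 2 - 1) / 15) * DV
        + 8 * Real.pi ^ 6 * ((1 - θ ^ 6) / 32 + (ν ^ 3 - 1) / 63)
        + 40 * zetaR 3 ^ 2 * (ν ^ ((3 : ℝ) / 2) - 1) ^ 2 := by
  obtain ⟨hXm, hν, hθ, hX0, hXi, hXc⟩ := hX
  have hν0 : 0 < ν := by linarith
  obtain ⟨b, hbdef⟩ : ∃ b, b = Real.sqrt ν := ⟨_, rfl⟩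
  have hb : 0 < b := by rw [hbdef]; exact Real.sqrt_pos.2 hν0
  have hb2 : b ^ 2 = ν := by rw [hbdef]; exact Real.sq_sqrt hν0.le
  have hα : ν ^ (-(1/2) : ℝ) = b⁻¹ := by
    rw [Real.rpow_neg hν0.le, hbdef, Real.sqrt_eq_rpow]
  have hb3 : ν ^ ((3 : ℝ) / 2) = b ^ 3 := by
    rw [← hb2, ← Real.rpow_natCast, ← Real.rpow_mul hb.le, ← Real.rpow_natCast]
    norm_num
  rw [← hbdef] at hθ
  have hθ1 : |θ| ≤ 1 := hθ.trans (min_le_left _ _)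
  have hθ2 : |θ| ≤ 2 * b - 1 := hθ.trans (min_le_right _ _)
  have hθb : |θ| ≤ b := by linarith
  have hC := Real.pi_pos
  set γ := Real.eulerMascheroniConstant with hγ
  let w : ℂ := ((b⁻¹ * τ + γ * (b⁻¹ - 1) : ℝ) : ℂ) +
    ((-(b⁻¹ * (Real.pi / 2 * θ)) : ℝ) : ℂ) * Complex.I
  have hwre : w.re = b⁻¹ * τ + γ * (b⁻¹ - 1) := by
    simp only [w, Complex.add_re, Complex.ofReal_re, Complex.re_ofReal_mul, Complex.I_re]; ring
  have hwim : w.im = -(b⁻¹ * (Real.pi / 2 * θ)) := by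
    simp only [w, Complex.add_im, Complex.ofReal_im, Complex.im_ofReal_mul, Complex.I_im]; ring
  have hw : |w.im| ≤ Real.pi / 2 := by
    rw [hwim, abs_neg, abs_mul, abs_mul, abs_of_pos (inv_pos.2 hb), abs_of_pos (half_pos hC)]
    have : b⁻¹ * |θ| ≤ 1 := by
      rw [inv_mul_le_iff₀ hb]; linarith
    nlinarith
  have hc : ∀ k : ℝ, 0 < k → ∫ ω, Real.cos (k * X ω) =
      (Complex.exp (-(Complex.exp w * ((k ^ b⁻¹ : ℝ) : ℂ)))).re := by
    intro k hk
    rw [charfn_re X hXm k, hXc k hk.ne', hα, Real.sign_of_pos hk, abs_of_pos hk,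
      Real.rpow_def_of_pos hk, Complex.ofReal_exp, ← Complex.exp_add]
    congr 4
    simp only [w]
    push_cast
    ring
  have hXae : ∀ᵐ ω, X ω ≠ 0 := by
    rw [ae_iff]; simpa using hX0
  let V : Ω → ℝ := fun ω => Real.log |X ω| - τ
  have hVm : Measurable V := by
    simp only [V]
    exact (Real.measurable_log.comp (measurable_norm.comp hXm)).sub_const τ
  have hV6 : Integrable (fun ω => V ω ^ 6) := by
    refine (((hXi 6).add (integrable_const (|τ| ^ 6))).const_mul 32).mono'
      (hVm.pow_const 6).aestronglyMeasurable (Filter.Eventually.of_forall fun ω => ?_)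
    rw [norm_pow, Real.norm_eq_abs]
    have h1 : |V ω| ≤ |Real.log (abs (X ω))| + |τ| := abs_sub _ _
    have h2 := add_pow_le (abs_nonneg (Real.log (abs (X ω)))) (abs_nonneg τ) 6
    have h3 := pow_le_pow_left₀ (abs_nonneg _) h1 6
    have h4 := h3.trans h2
    have h5 : (2 : ℝ) ^ (6 - 1) = 32 := by norm_num
    rw [h5] at h4
    exact h4
  have hδ : 0 < min 1 b⁻¹ := lt_min one_pos (inv_pos.2 hb)
  obtain ⟨hLa, hLd⟩ := iteratedDeriv_of_hasSum (Lfun b θ) (Lco b θ) _ hδ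
    (fun s hs => Lfun_hasSum b θ s hb hθ1 hs)
  have hmain := six_limit (ℙ : Measure Ω) V hVm hV6 _ hδ (fun s => Real.exp (Lfun b θ s)) hLa.rexp
    (by
      intro s h0 hs
      have h1 : s < 1 := lt_of_lt_of_le hs (min_le_left _ _)
      have h2 : s < b⁻¹ := lt_of_lt_of_le hs (min_le_right _ _)
      have h3 : b * s < 1 := by
        have := mul_lt_mul_of_pos_left h2 hb
        rwa [mul_inv_cancel₀ hb.ne'] at this
      obtain ⟨m1, m2⟩ := moment_formula (ℙ : Measure Ω) X hXm hXae b⁻¹ s w (inv_pos.2 hb) h0 h2 h1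
        hw hc
      have eV : ∀ ω, Real.exp (s * V ω) = Real.exp (s * Real.log |X ω|) * Real.exp (-(s * τ)) := by
        intro ω
        rw [← Real.exp_add]
        simp only [V]
        congr 1; ring
      refine ⟨?_, ?_⟩
      · simp only [eV]
        exact m1.mul_const _
      · have e := exp_Lfun b θ s hb hθ1 h0 h1 h3
        rw [mgf]
        simp only [eV]
        rw [integral_mul_const]
        have hG : 0 < Real.Gamma (1 - s) := Real.Gamma_pos_of_pos (by linarith)
        have hCo : 0 < Real.cos (Real.pi / 2 * s) :=
          Real.cos_pos_of_mem_Ioo ⟨by nlinarith, by nlinarith⟩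
        have hne : Real.Gamma (1 - s) * Real.cos (Real.pi / 2 * s) ≠ 0 := (mul_pos hG hCo).ne'
        apply mul_right_cancel₀ hne
        rw [e]
        rw [hwre, hwim, show s / b⁻¹ = b * s by field_simp,
          show b * s * (b⁻¹ * τ + γ * (b⁻¹ - 1)) = s * τ + γ * (1 - b) * s by field_simp,
          show b * s * -(b⁻¹ * (Real.pi / 2 * θ)) = -(Real.pi / 2 * (θ * s)) by field_simp,
          Real.cos_neg, Real.exp_add] at m2
        have hE : Real.exp (s * τ) * Real.exp (-(s * τ)) = 1 := by
          rw [← Real.exp_add]; simp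
        linear_combination Real.exp (-(s * τ)) * m2 + Real.Gamma (1 - b * s) *
          Real.exp (γ * (1 - b) * s) * Real.cos (Real.pi / 2 * (θ * s)) * hE)
  change ∫ ω, V ω ^ 6 = _
  rw [hmain, exp_comp_six _ hLa]
  · rw [hLd, hLd, hLd, hLd, hb3, hDV, ← hb2, zetaR, ← zsum_three]
    simp only [Lco, gco, zsum_two, zsum_four, zsum_six]
    norm_num [Nat.factorial]
    ring
  · rw [hLd]; simp [Lco, gco]
  · rw [hLd]
    simp only [Lco, gco]
    norm_num
    ring
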